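/- Let p ≥ 5 be an odd integer not divisible by 3, and set d = (p−1)/2 and ℓ = ⌊p/3⌋. Then gcd(S_d(z) − S_{d−1}(z), S_{ℓ−1−⌊ℓ/2⌋}(z)) = 1 and gcd(S_d(z) − S_{d−1}(z), S_{d−ℓ−1}(z)) = 1 in ℂ[z]. -/

import Mathlib

open Polynomial

/-- The Chebyshev-like polynomials `S n ∈ R[X]` defined by `S 0 = 1`, `S 1 = X` and
`S (n+1) = X * S n - S (n-1)` for all `n : ℤ`. -/
noncomputable def S (R : Type*) [CommRing R] : ℤ → R[X]
  | 0 => 1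
  | 1 => X
  | (n : ℕ) + 2 => X * S R (n + 1) - S R n
  | -((n : ℕ) + 1) => X * S R (-n) - S R (-n + 1)
  termination_by n => Int.natAbs n + Int.natAbs (n - 1)

/-!
Put `E n = S (n - 1)`, a polynomial analogue of `sin (n θ) / sin θ`. By the addition formula, `E`
is a divisibility sequence, and a Bézout relation `a * m + b * n = 1` writes `E 1 = 1` as a
combination of `E m` and `E n`; so `E` maps coprime indices to coprime polynomials. Now
`S d - S (d - 1)` divides `E (2 * d + 1) = E p`, while both `ℓ - ⌊ℓ/2⌋` and `d - ℓ` are the integer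
`m` nearest to `p / 6`, which is prime to `p = 6 * m ± 1`.
-/

theorem S_eq_chebyshev_S (R : Type*) [CommRing R] (n : ℤ) : S R n = Chebyshev.S R n := by
  induction n using Chebyshev.induct with
  | zero => simp [S]
  | one => simp [S]
  | add_two n ih_succ ih =>
    change S R (Int.ofNat (n + 2)) = _
    rw [S, ih_succ, ih, Chebyshev.S_add_two]
  | neg_add_one n ih ih_succ =>
    rw [← neg_add', ← Int.negSucc_eq, S, ih, ih_succ, Int.negSucc_eq, neg_add', Chebyshev.S_sub_one]

section Chebyshev

variable (R : Type*) [CommRing R]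

theorem chebyshev_S_add (m n : ℤ) :
    Chebyshev.S R (m + n) =
      Chebyshev.S R m * Chebyshev.S R n - Chebyshev.S R (m - 1) * Chebyshev.S R (n - 1) := by
  induction n using Chebyshev.induct with
  | zero => simp
  | one => simp [Chebyshev.S_add_one, mul_comm]
  | add_two n ih_succ ih =>
    have hsum := Chebyshev.S_add_two R (m + n)
    have hpred := Chebyshev.S_add_one R n
    rw [add_assoc, add_assoc] at hsum
    rw [add_sub_cancel_right] at ih_succ
    rw [show (n : ℤ) + 2 - 1 = n + 1 by ring]
    linear_combination hsum + X * ih_succ - ih - Chebyshev.S R m * Chebyshev.S_add_two R n +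
      Chebyshev.S R (m - 1) * hpred
  | neg_add_one n ih ih_succ =>
    have hsum := Chebyshev.S_sub_one R (m + -n)
    have hpred := Chebyshev.S_sub_two R (-n)
    rw [add_sub_assoc, add_assoc] at hsum
    rw [add_sub_cancel_right] at ih_succ
    rw [show (-n : ℤ) - 1 - 1 = -n - 2 by ring]
    linear_combination hsum + X * ih - ih_succ - Chebyshev.S R m * Chebyshev.S_sub_one R (-n) +
      Chebyshev.S R (m - 1) * hpred

theorem chebyshev_S_two_mul (n : ℤ) :
    Chebyshev.S R (2 * n) = (Chebyshev.S R n - Chebyshev.S R (n - 1)) *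
      (Chebyshev.S R n + Chebyshev.S R (n - 1)) := by
  rw [two_mul, chebyshev_S_add]
  ring

variable {m n : ℤ}

theorem chebyshev_S_sub_one_dvd_S_sub_one (h : m ∣ n) :
    Chebyshev.S R (m - 1) ∣ Chebyshev.S R (n - 1) := by
  obtain ⟨k, rfl⟩ := h
  induction k with
  | zero => simp
  | succ k ih =>
    rw [show m * (k + 1) - 1 = m * k - 1 + m by ring, chebyshev_S_add]
    exact dvd_sub (ih.mul_right _) (dvd_mul_left _ _)
  | pred k ih =>
    rw [show m * (-k - 1) - 1 = m * -k - 1 + -m by ring, chebyshev_S_add, Chebyshev.S_neg_sub_one]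
    exact dvd_sub (ih.mul_right _) ((dvd_neg.mpr dvd_rfl).mul_left _)

theorem isCoprime_chebyshev_S_sub_one (h : IsCoprime m n) :
    IsCoprime (Chebyshev.S R (m - 1)) (Chebyshev.S R (n - 1)) := by
  obtain ⟨a, b, hab⟩ := h
  have hm := chebyshev_S_sub_one_dvd_S_sub_one R (dvd_mul_left m a)
  have hn := chebyshev_S_sub_one_dvd_S_sub_one R (dvd_mul_left n b)
  refine .of_isCoprime_of_dvd_left (.of_isCoprime_of_dvd_right ?_ hn) hm
  have hadd := chebyshev_S_add R (a * m - 1) (b * n)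
  rw [show a * m - 1 + b * n = 0 by linear_combination hab, Chebyshev.S_zero] at hadd
  exact ⟨Chebyshev.S R (b * n), -Chebyshev.S R (a * m - 1 - 1), by linear_combination -hadd⟩

theorem isCoprime_chebyshev_S_sub_S_sub_one (h : IsCoprime (2 * m + 1) n) :
    IsCoprime (Chebyshev.S R m - Chebyshev.S R (m - 1)) (Chebyshev.S R (n - 1)) := by
  have hdvd : Chebyshev.S R m - Chebyshev.S R (m - 1) ∣ Chebyshev.S R (2 * m + 1 - 1) :=
    ⟨_, by rw [add_sub_cancel_right, chebyshev_S_two_mul]⟩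
  exact (isCoprime_chebyshev_S_sub_one R h).of_isCoprime_of_dvd_left hdvd

end Chebyshev

theorem coprime_S_d_S_aux_general (R : Type*) [CommRing R] (p : ℤ) (hodd : Odd p) (h3 : ¬(3 ∣ p)) :
    IsCoprime (S R ((p - 1) / 2) - S R ((p - 1) / 2 - 1))
        (S R (p / 3 - 1 - p / 3 / 2)) ∧
      IsCoprime (S R ((p - 1) / 2) - S R ((p - 1) / 2 - 1))
        (S R ((p - 1) / 2 - p / 3 - 1)) := by
  obtain ⟨d, rfl⟩ := hodd
  obtain ⟨m, hm⟩ : ∃ m, 2 * d + 1 = 6 * m + 1 ∨ 2 * d + 1 = 6 * m - 1 :=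
    ⟨d - (2 * d + 1) / 3, by omega⟩
  have hcop : IsCoprime (2 * d + 1) m := by
    rcases hm with hm | hm
    · exact ⟨1, -6, by linear_combination hm⟩
    · exact ⟨-1, 6, by linear_combination -hm⟩
  have hd : (2 * d + 1 - 1) / 2 = d := by omega
  have hfst : (2 * d + 1) / 3 - 1 - (2 * d + 1) / 3 / 2 = m - 1 := by omega
  have hsnd : d - (2 * d + 1) / 3 - 1 = m - 1 := by omega
  simp only [S_eq_chebyshev_S, hd, hfst, hsnd, and_self]
  exact isCoprime_chebyshev_S_sub_S_sub_one R hcop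

/-- For odd `p ≥ 5` not divisible by `3`, with `d = (p-1)/2` and `ℓ = ⌊p/3⌋`,
`S_d(z) - S_{d-1}(z)` is coprime to `S_{ℓ-1-⌊ℓ/2⌋}(z)` and to `S_{d-ℓ-1}(z)`. -/
theorem coprime_S_d_S_aux (p : ℤ) (hp5 : 5 ≤ p) (hodd : Odd p) (h3 : ¬(3 ∣ p)) :
    IsCoprime (S ℂ ((p - 1) / 2) - S ℂ ((p - 1) / 2 - 1))
        (S ℂ (p / 3 - 1 - p / 3 / 2)) ∧
      IsCoprime (S ℂ ((p - 1) / 2) - S ℂ ((p - 1) / 2 - 1))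
        (S ℂ ((p - 1) / 2 - p / 3 - 1)) :=
  coprime_S_d_S_aux_general ℂ p hodd h3
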